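/- arXiv:1502.00710 — 2 statements merged into one kernel-verified Lean document; each statement's English description precedes it below -/
import Mathlib

section
/- Let n ≥ 1, let (Y,d) be a metric space containing at least two points, let y₀ ∈ Y, 0 < β ≤ 1, and equip ℝⁿ × Y with the metric D((x₁,y₁),(x₂,y₂)) = max{|x₁−x₂|^β, d(y₁,y₂)}. Let γ: ℝⁿ × Y → ℝⁿ × Y have the form γ(x,y) = (a A(x + x₀ + h(y)), σ(y)) where a > 0, A ∈ O(n), x₀ ∈ ℝⁿ, h: Y → ℝⁿ is Lipschitz as a map (Y,d) → (ℝⁿ,|·|^β) with h(y₀) = 0, and σ is a similarity of Y with similarity constant ã > 0. If γ is an (M,C)-quasisimilarity of (ℝⁿ × Y, D), then C/M ≤ ã ≤ MC and C/M ≤ a^β ≤ MC; in particular M^{-2} ≤ ã / a^β ≤ M². -/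
/-!
Each bound is read off from pairs of points on which `D` is controlled by a single factor.
Two points of the fibre `ℝⁿ × {y}` have their `D`-distance multiplied by exactly `a ^ β`, which
gives both bounds for `a ^ β`. A horizontal pair `(x, y)`, `(x, y')` has `D`-distance `d(y, y')`,
while its image is at distance at least `a' d(y, y')`: this bounds `a'` from above. Conversely,
for fixed `z`, two points of `{(x, y) : γ(x, y) ∈ {z} × Y}` are at `D`-distance at least
`d(y, y')`, while their images form a horizontal pair, at distance exactly `a' d(y, y')`: this
bounds `a'` from below.
-/

/-- The metric `D((x₁,y₁),(x₂,y₂)) = max{|x₁−x₂|^β, d(y₁,y₂)}` on `ℝⁿ × Y`. -/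
noncomputable def prodDist (n : ℕ) {Y : Type*} [MetricSpace Y] (β : ℝ)
    (p q : EuclideanSpace ℝ (Fin n) × Y) : ℝ :=
  max (‖p.1 - q.1‖ ^ β) (dist p.2 q.2)

section SkewProduct

variable {X X' Y Y' : Type*}

/-- The skew product `(x, y) ↦ (g y x, σ y)` over `σ`, with fibre maps `g y`. It abstracts the
affine form of `γ`; the base is the second coordinate, as in the statement. -/
def skewProduct (g : Y → X → X') (σ : Y → Y') (p : X × Y) : X' × Y' :=
  (g p.2 p.1, σ p.2)

variable [PseudoMetricSpace X] [PseudoMetricSpace X'] [PseudoMetricSpace Y] [PseudoMetricSpace Y']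

/-- The distance `max {d(x, x') ^ β, d(y, y')}` on a product of arbitrary pseudometric spaces,
generalizing `prodDist`. It is a bare function because `X × Y` already carries the sup metric. -/
noncomputable def snowflakeProdDist (β : ℝ) (p q : X × Y) : ℝ :=
  max (dist p.1 q.1 ^ β) (dist p.2 q.2)

theorem prodDist_eq_snowflakeProdDist {n : ℕ} {Y : Type*} [MetricSpace Y] (β : ℝ)
    (p q : EuclideanSpace ℝ (Fin n) × Y) :
    prodDist n β p q = snowflakeProdDist β p q := by
  rw [prodDist, snowflakeProdDist, dist_eq_norm p.1]

theorem dist_snd_le_snowflakeProdDist (β : ℝ) (p q : X × Y) :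
    dist p.2 q.2 ≤ snowflakeProdDist β p q :=
  le_max_right _ _

variable {β : ℝ} {g : Y → X → X'} {σ : Y → Y'} {a a' c : ℝ} {p q : X × Y}

theorem snowflakeProdDist_pos_of_dist_fst_pos (β : ℝ) (hpq : 0 < dist p.1 q.1) :
    0 < snowflakeProdDist β p q :=
  (Real.rpow_pos_of_pos hpq β).trans_le (le_max_left _ _)

theorem snowflakeProdDist_of_fst_eq (hβ : β ≠ 0) (hpq : p.1 = q.1) :
    snowflakeProdDist β p q = dist p.2 q.2 := by
  rw [snowflakeProdDist, hpq, dist_self, Real.zero_rpow hβ, max_eq_right dist_nonneg]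

theorem snowflakeProdDist_of_snd_eq (β : ℝ) (hpq : p.2 = q.2) :
    snowflakeProdDist β p q = dist p.1 q.1 ^ β := by
  rw [snowflakeProdDist, hpq, dist_self, max_eq_left (Real.rpow_nonneg dist_nonneg β)]

theorem snowflakeProdDist_skewProduct_of_snd_eq (β : ℝ) (ha : 0 ≤ a) (hpq : p.2 = q.2)
    (hg : dist (g p.2 p.1) (g q.2 q.1) = a * dist p.1 q.1) :
    snowflakeProdDist β (skewProduct g σ p) (skewProduct g σ q) =
      a ^ β * snowflakeProdDist β p q :=
  calc snowflakeProdDist β (skewProduct g σ p) (skewProduct g σ q)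
    _ = dist (g p.2 p.1) (g q.2 q.1) ^ β := snowflakeProdDist_of_snd_eq β (congrArg σ hpq)
    _ = a ^ β * dist p.1 q.1 ^ β := by rw [hg, Real.mul_rpow ha dist_nonneg]
    _ = a ^ β * snowflakeProdDist β p q := by rw [snowflakeProdDist_of_snd_eq β hpq]

theorem le_base_constant_of_le_snowflakeProdDist (hβ : β ≠ 0) (hpq : 0 < dist p.2 q.2)
    (hc : 0 ≤ c) (hg : g p.2 p.1 = g q.2 q.1)
    (hσ : dist (σ p.2) (σ q.2) = a' * dist p.2 q.2)
    (hle : c * snowflakeProdDist β p q ≤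
      snowflakeProdDist β (skewProduct g σ p) (skewProduct g σ q)) :
    c ≤ a' := by
  refine le_of_mul_le_mul_right ?_ hpq
  calc c * dist p.2 q.2 ≤ c * snowflakeProdDist β p q := by
        gcongr
        exact dist_snd_le_snowflakeProdDist β p q
    _ ≤ snowflakeProdDist β (skewProduct g σ p) (skewProduct g σ q) := hle
    _ = dist (σ p.2) (σ q.2) := snowflakeProdDist_of_fst_eq hβ hg
    _ = a' * dist p.2 q.2 := hσ

theorem base_constant_le_of_snowflakeProdDist_le (hβ : β ≠ 0) (hpq : 0 < dist p.2 q.2)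
    (hfst : p.1 = q.1) (hσ : dist (σ p.2) (σ q.2) = a' * dist p.2 q.2)
    (hle : snowflakeProdDist β (skewProduct g σ p) (skewProduct g σ q) ≤
      c * snowflakeProdDist β p q) :
    a' ≤ c := by
  refine le_of_mul_le_mul_right ?_ hpq
  calc a' * dist p.2 q.2 = dist (σ p.2) (σ q.2) := hσ.symm
    _ ≤ snowflakeProdDist β (skewProduct g σ p) (skewProduct g σ q) :=
        dist_snd_le_snowflakeProdDist β (skewProduct g σ p) (skewProduct g σ q)
    _ ≤ c * snowflakeProdDist β p q := hle
    _ = c * dist p.2 q.2 := by rw [snowflakeProdDist_of_fst_eq hβ hfst]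

theorem le_fiber_constant_of_le_snowflakeProdDist (ha : 0 ≤ a) (hpq : 0 < dist p.1 q.1)
    (hsnd : p.2 = q.2) (hg : dist (g p.2 p.1) (g q.2 q.1) = a * dist p.1 q.1)
    (hle : c * snowflakeProdDist β p q ≤
      snowflakeProdDist β (skewProduct g σ p) (skewProduct g σ q)) :
    c ≤ a ^ β := by
  rw [snowflakeProdDist_skewProduct_of_snd_eq β ha hsnd hg] at hle
  exact le_of_mul_le_mul_right hle (snowflakeProdDist_pos_of_dist_fst_pos β hpq)

theorem fiber_constant_le_of_snowflakeProdDist_le (ha : 0 ≤ a) (hpq : 0 < dist p.1 q.1)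
    (hsnd : p.2 = q.2) (hg : dist (g p.2 p.1) (g q.2 q.1) = a * dist p.1 q.1)
    (hle : snowflakeProdDist β (skewProduct g σ p) (skewProduct g σ q) ≤
      c * snowflakeProdDist β p q) :
    a ^ β ≤ c := by
  rw [snowflakeProdDist_skewProduct_of_snd_eq β ha hsnd hg] at hle
  exact le_of_mul_le_mul_right hle (snowflakeProdDist_pos_of_dist_fst_pos β hpq)

theorem div_le_sq_of_le_mul_of_div_le {M C r s : ℝ} (hM : 0 < M) (hC : 0 < C)
    (hr : r ≤ M * C) (hs : C / M ≤ s) : r / s ≤ M ^ 2 := by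
  rw [div_le_iff₀ ((div_pos hC hM).trans_le hs)]
  calc r ≤ M * C := hr
    _ = M ^ 2 * (C / M) := by field_simp
    _ ≤ M ^ 2 * s := by gcongr

theorem quasisimilarity_constant_bounds_general (hX : ∃ x x' : X, dist x x' ≠ 0)
    (hY : ∃ y y' : Y, dist y y' ≠ 0) {β : ℝ} (hβ : 0 < β)
    {g : Y → X → X'} {σ : Y → Y'} {a a' : ℝ}
    (hg : ∀ y x x', dist (g y x) (g y x') = a * dist x x')
    (hg_surj : ∀ y, Function.Surjective (g y))
    (hσ : ∀ y y', dist (σ y) (σ y') = a' * dist y y')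
    {M C : ℝ} (hM : 0 < M) (hC : 0 < C)
    (hqs : ∀ p q : X × Y,
      C / M * snowflakeProdDist β p q ≤
          snowflakeProdDist β (skewProduct g σ p) (skewProduct g σ q) ∧
        snowflakeProdDist β (skewProduct g σ p) (skewProduct g σ q) ≤
          M * C * snowflakeProdDist β p q) :
    (C / M ≤ a' ∧ a' ≤ M * C) ∧ (C / M ≤ a ^ β ∧ a ^ β ≤ M * C) ∧
      (M ^ 2)⁻¹ ≤ a' / a ^ β ∧ a' / a ^ β ≤ M ^ 2 := by
  obtain ⟨x, x', hxx'⟩ := hX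
  obtain ⟨y, y', hyy'⟩ := hY
  have hx : 0 < dist x x' := dist_nonneg.lt_of_ne' hxx'
  have hy : 0 < dist y y' := dist_nonneg.lt_of_ne' hyy'
  have hCM : 0 < C / M := div_pos hC hM
  have base_lower : C / M ≤ a' := by
    obtain ⟨w, hw⟩ := hg_surj y' (g y x)
    exact le_base_constant_of_le_snowflakeProdDist hβ.ne' (p := (x, y)) (q := (w, y')) hy hCM.le
      hw.symm (hσ y y') (hqs _ _).1
  have base_upper : a' ≤ M * C :=
    base_constant_le_of_snowflakeProdDist_le hβ.ne' (p := (x, y)) (q := (x, y')) hy rfl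
      (hσ y y') (hqs _ _).2
  have ha : 0 ≤ a := nonneg_of_mul_nonneg_left (hg y x x' ▸ dist_nonneg) hx
  have fiber_lower : C / M ≤ a ^ β :=
    le_fiber_constant_of_le_snowflakeProdDist ha (p := (x, y)) (q := (x', y)) hx rfl
      (hg y x x') (hqs _ _).1
  have fiber_upper : a ^ β ≤ M * C :=
    fiber_constant_le_of_snowflakeProdDist_le ha (p := (x, y)) (q := (x', y)) hx rfl
      (hg y x x') (hqs _ _).2
  refine ⟨⟨base_lower, base_upper⟩, ⟨fiber_lower, fiber_upper⟩, ?_,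
    div_le_sq_of_le_mul_of_div_le hM hC base_upper fiber_lower⟩
  rw [← inv_div]
  exact inv_anti₀ (div_pos (hCM.trans_le fiber_lower) (hCM.trans_le base_lower))
    (div_le_sq_of_le_mul_of_div_le hM hC fiber_upper base_lower)

end SkewProduct

theorem dist_smul_isometry_add {𝕜 E F : Type*} [NormedField 𝕜] [SeminormedAddCommGroup E]
    [SeminormedAddCommGroup F] [NormedSpace 𝕜 F] (a : 𝕜) {A : E → F} (hA : Isometry A)
    (v x x' : E) : dist (a • A (x + v)) (a • A (x' + v)) = ‖a‖ * dist x x' := by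
  rw [dist_smul₀, hA.dist_eq, dist_add_right]

theorem surjective_smul_comp_add {G₀ E F : Type*} [GroupWithZero G₀] [AddGroup E]
    [MulAction G₀ F] {a : G₀} (ha : a ≠ 0) {A : E → F} (hA : Function.Surjective A) (v : E) :
    Function.Surjective fun x ↦ a • A (x + v) :=
  (MulAction.surjective₀ ha).comp (hA.comp (add_right_surjective v))

/-- If `γ(x,y) = (a A (x + x₀ + h y), σ y)` (with `a > 0`, `A ∈ O(n)`,
`h` Lipschitz into `(ℝⁿ,|·|^β)` with `h y₀ = 0`, `σ` a similarity of constant `a'`) is an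
`(M,C)`-quasisimilarity of `(ℝⁿ × Y, D)`, then `C/M ≤ a' ≤ MC` and `C/M ≤ a^β ≤ MC`; in
particular `M⁻² ≤ a' / a^β ≤ M²`. -/
theorem quasisimilarity_constant_bounds (n : ℕ) (hn : 1 ≤ n) {Y : Type*} [MetricSpace Y]
    (hY : ∃ y y' : Y, y ≠ y') (y₀ : Y) (β : ℝ) (hβ0 : 0 < β) (hβ1 : β ≤ 1)
    (a : ℝ) (ha : 0 < a)
    (A : EuclideanSpace ℝ (Fin n) ≃ₗᵢ[ℝ] EuclideanSpace ℝ (Fin n))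
    (x₀ : EuclideanSpace ℝ (Fin n)) (h : Y → EuclideanSpace ℝ (Fin n))
    (hLip : ∃ L : ℝ, ∀ y₁ y₂ : Y, ‖h y₁ - h y₂‖ ^ β ≤ L * dist y₁ y₂)
    (hh0 : h y₀ = 0)
    (σ : Y → Y) (hσbij : Function.Bijective σ)
    (a' : ℝ) (ha' : 0 < a') (hσ : ∀ y y' : Y, dist (σ y) (σ y') = a' * dist y y')
    (γ : EuclideanSpace ℝ (Fin n) × Y → EuclideanSpace ℝ (Fin n) × Y)
    (hγ : ∀ p, γ p = (a • A (p.1 + x₀ + h p.2), σ p.2))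
    (hγbij : Function.Bijective γ)
    (M C : ℝ) (hM : 1 ≤ M) (hC : 0 < C)
    (hqs : ∀ p q : EuclideanSpace ℝ (Fin n) × Y,
      C / M * prodDist n β p q ≤ prodDist n β (γ p) (γ q) ∧
        prodDist n β (γ p) (γ q) ≤ M * C * prodDist n β p q) :
    (C / M ≤ a' ∧ a' ≤ M * C) ∧ (C / M ≤ a ^ β ∧ a ^ β ≤ M * C) ∧
      (M ^ 2)⁻¹ ≤ a' / a ^ β ∧ a' / a ^ β ≤ M ^ 2 := by
  obtain rfl : γ = skewProduct (fun y x ↦ a • A (x + (x₀ + h y))) σ :=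
    funext fun p ↦ by rw [hγ, add_assoc, skewProduct]
  simp only [prodDist_eq_snowflakeProdDist] at hqs
  have hfiber (y : Y) (x x' : EuclideanSpace ℝ (Fin n)) :
      dist (a • A (x + (x₀ + h y))) (a • A (x' + (x₀ + h y))) = a * dist x x' := by
    rw [dist_smul_isometry_add a A.isometry, Real.norm_of_nonneg ha.le]
  exact quasisimilarity_constant_bounds_general
    ⟨0, EuclideanSpace.single ⟨0, hn⟩ 1, by simp⟩ (by simpa only [dist_ne_zero] using hY) hβ0
    hfiber (fun y ↦ surjective_smul_comp_add ha.ne' A.surjective (x₀ + h y))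
    hσ (zero_lt_one.trans_le hM) hC hqs
end

section
/- Let (Y,d) be a metric space with basepoint y₀, 0 < β ≤ 1, and E the space of maps h: Y → ℝⁿ Lipschitz as maps (Y,d) → (ℝⁿ,|·|^β) with h(y₀) = 0. The set G of all bijections of ℝⁿ × Y of the form γ(x,y) = (a A(x + x₀ + h(y)), σ(y)), with a > 0, A ∈ O(n), x₀ ∈ ℝⁿ, h ∈ E, and σ a bijective similarity of Y, is closed under composition, the data (a, A, x₀, h, σ) of such a map is uniquely determined, and for two such maps γ₁, γ₂ the composite γ₁ ∘ γ₂ satisfies h_{γ₁∘γ₂} = h_{γ₂} + π_{γ₂} h_{γ₁}, where (π_γ h)(y) = a_γ^{-1} A_γ^{-1} h(σ_γ(y)) − a_γ^{-1} A_γ^{-1} h(σ_γ(y₀)). Consequently, for any group Γ of maps of this form, the map b: Γ* → E, b_γ = h_γ, satisfies the 1-cocycle identity b_{γ₂*γ₁} = b_{γ₂} + π_{γ₂} b_{γ₁} for the Γ*-module structure π on E. -/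
/-- `h : Y → ℝⁿ` is Lipschitz as a map `(Y,d) → (ℝⁿ,|·|^β)` and vanishes at `y₀`. -/
def IsHolderZero (n : ℕ) {Y : Type*} [MetricSpace Y] (y₀ : Y) (β : ℝ)
    (h : Y → EuclideanSpace ℝ (Fin n)) : Prop :=
  (∃ L : ℝ, ∀ y₁ y₂ : Y, ‖h y₁ - h y₂‖ ^ β ≤ L * dist y₁ y₂) ∧ h y₀ = 0

/-- `σ` is a (bijective) similarity of `Y` with similarity constant `c`. -/
def IsSimilarityWith {Y : Type*} [MetricSpace Y] (c : ℝ) (σ : Y → Y) : Prop :=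
  Function.Bijective σ ∧ ∀ y y' : Y, dist (σ y) (σ y') = c * dist y y'

/-- The map `(x,y) ↦ (a A (x + x₀ + h y), σ y)` of `ℝⁿ × Y`. -/
noncomputable def formMap (n : ℕ) {Y : Type*} (a : ℝ)
    (A : EuclideanSpace ℝ (Fin n) ≃ₗᵢ[ℝ] EuclideanSpace ℝ (Fin n))
    (x₀ : EuclideanSpace ℝ (Fin n)) (h : Y → EuclideanSpace ℝ (Fin n)) (σ : Y → Y) :
    EuclideanSpace ℝ (Fin n) × Y → EuclideanSpace ℝ (Fin n) × Y :=
  fun p => (a • A (p.1 + x₀ + h p.2), σ p.2)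

/-- The map `(π_γ h)(y) = a⁻¹ A⁻¹ h(σ y) − a⁻¹ A⁻¹ h(σ y₀)`. -/
noncomputable def piMap (n : ℕ) {Y : Type*} (y₀ : Y) (a : ℝ)
    (A : EuclideanSpace ℝ (Fin n) ≃ₗᵢ[ℝ] EuclideanSpace ℝ (Fin n))
    (σ : Y → Y) (h : Y → EuclideanSpace ℝ (Fin n)) : Y → EuclideanSpace ℝ (Fin n) :=
  fun y => a⁻¹ • A.symm (h (σ y)) - a⁻¹ • A.symm (h (σ y₀))

/-!
The first coordinate of `(x, y) ↦ (a A (x + x₀ + h y), σ y)` vanishes exactly on the graph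
`x = -(x₀ + h y)`, so the map determines `x₀ + h`, and `h y₀ = 0` separates `x₀` from `h`; then it
determines `a A`, and norms separate `a` from `A`. The composite of two such maps is again one, with
`h₂ + π₂ h₁` in place of `h`, so the cocycle identity is an instance of uniqueness. The space `E`
consists of the `β⁻¹`-Hölder maps vanishing at `y₀`, and Hölder maps are stable under sums, scalars
and composition with Lipschitz maps.
-/

open scoped NNReal

theorem memHolder_iff_exists_rpow_dist_le {X Z : Type*} [PseudoMetricSpace X]
    [PseudoMetricSpace Z] {r : ℝ≥0} (hr : 0 < r) {f : X → Z} :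
    MemHolder r f ↔ ∃ L : ℝ, ∀ x y, dist (f x) (f y) ^ (r : ℝ)⁻¹ ≤ L * dist x y := by
  have hr' : (0 : ℝ) < r := hr
  constructor
  · rintro ⟨C, hC⟩
    refine ⟨(C : ℝ) ^ (r : ℝ)⁻¹, fun x y => ?_⟩
    rw [Real.rpow_inv_le_iff_of_pos dist_nonneg (by positivity) hr',
      Real.mul_rpow (by positivity) dist_nonneg, Real.rpow_inv_rpow C.coe_nonneg hr'.ne']
    exact hC.dist_le x y
  · rintro ⟨L, hL⟩
    refine ⟨L.toNNReal ^ (r : ℝ), fun x y => ?_⟩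
    have hdist : dist (f x) (f y) ^ (r : ℝ)⁻¹ ≤ L.toNNReal * dist x y :=
      (hL x y).trans (by gcongr; exact L.le_coe_toNNReal)
    rw [Real.rpow_inv_le_iff_of_pos dist_nonneg (by positivity) hr',
      Real.mul_rpow L.toNNReal.coe_nonneg dist_nonneg] at hdist
    rw [edist_nndist, edist_nndist, ← ENNReal.coe_rpow_of_nonneg _ hr'.le]
    exact_mod_cast hdist

theorem smul_inj_of_norm_preserving {E F : Type*} [NormedAddCommGroup E] [Nontrivial E]
    [SeminormedAddCommGroup F] [NormedSpace ℝ F] {a₁ a₂ : ℝ} (ha₁ : 0 < a₁) (ha₂ : 0 < a₂)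
    {f₁ f₂ : E → F} (hf₁ : ∀ v, ‖f₁ v‖ = ‖v‖) (hf₂ : ∀ v, ‖f₂ v‖ = ‖v‖) :
    a₁ • f₁ = a₂ • f₂ ↔ a₁ = a₂ ∧ f₁ = f₂ := by
  refine ⟨fun hsmul => ?_, fun ⟨ha, hf⟩ => by rw [ha, hf]⟩
  obtain ⟨v, hv⟩ := exists_ne (0 : E)
  have hnorm : a₁ * ‖v‖ = a₂ * ‖v‖ := by
    simpa [norm_smul, abs_of_pos, ha₁, ha₂, hf₁, hf₂] using congrArg norm (congrFun hsmul v)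
  obtain rfl : a₁ = a₂ := mul_right_cancel₀ (norm_ne_zero_iff.mpr hv) hnorm
  exact ⟨rfl, (smul_right_inj ha₁.ne').mp hsmul⟩

section IsSimilarityWith

variable {Y : Type*} [MetricSpace Y] {c c₁ c₂ : ℝ} {σ σ₁ σ₂ : Y → Y}

theorem IsSimilarityWith.lipschitzWith (hσ : IsSimilarityWith c σ) :
    LipschitzWith c.toNNReal σ :=
  .of_dist_le_mul fun y z =>
    (hσ.2 y z).trans_le (mul_le_mul_of_nonneg_right c.le_coe_toNNReal dist_nonneg)

theorem IsSimilarityWith.comp (hσ₁ : IsSimilarityWith c₁ σ₁) (hσ₂ : IsSimilarityWith c₂ σ₂) :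
    IsSimilarityWith (c₁ * c₂) (σ₁ ∘ σ₂) :=
  ⟨hσ₁.1.comp hσ₂.1, fun y z => by rw [Function.comp_apply, Function.comp_apply, hσ₁.2, hσ₂.2,
    mul_assoc]⟩

end IsSimilarityWith

section FormMap

variable {n : ℕ} {Y : Type*} {y₀ : Y} {a a₁ a₂ : ℝ}
  {A A₁ A₂ : EuclideanSpace ℝ (Fin n) ≃ₗᵢ[ℝ] EuclideanSpace ℝ (Fin n)}
  {x₀ x₁ x₂ : EuclideanSpace ℝ (Fin n)} {h h₁ h₂ : Y → EuclideanSpace ℝ (Fin n)}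
  {σ σ₁ σ₂ : Y → Y}

theorem piMap_apply_basepoint : piMap n y₀ a A σ h y₀ = 0 := sub_self _

section Holder

variable [MetricSpace Y] {β : ℝ}

theorem isHolderZero_iff_memHolder (hβ : 0 < β) :
    IsHolderZero n y₀ β h ↔ MemHolder β.toNNReal⁻¹ h ∧ h y₀ = 0 := by
  rw [memHolder_iff_exists_rpow_dist_le (inv_pos.mpr (Real.toNNReal_pos.mpr hβ))]
  simp only [IsHolderZero, dist_eq_norm, NNReal.coe_inv, inv_inv, Real.coe_toNNReal _ hβ.le]

theorem IsHolderZero.add (hβ : 0 < β) (hh₁ : IsHolderZero n y₀ β h₁)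
    (hh₂ : IsHolderZero n y₀ β h₂) : IsHolderZero n y₀ β (h₁ + h₂) := by
  rw [isHolderZero_iff_memHolder hβ] at *
  exact ⟨hh₁.1.add hh₂.1, by rw [Pi.add_apply, hh₁.2, hh₂.2, add_zero]⟩

theorem isHolderZero_piMap {K : ℝ≥0} (hβ : 0 < β) (hh : IsHolderZero n y₀ β h)
    (hσ : LipschitzWith K σ) : IsHolderZero n y₀ β (piMap n y₀ a A σ h) := by
  rw [isHolderZero_iff_memHolder hβ] at *
  have hcomp : MemHolder β.toNNReal⁻¹ (A.symm ∘ h ∘ σ) := by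
    simpa only [one_mul, mul_one] using
      (hσ.holderWith.memHolder.comp hh.1).comp A.symm.lipschitz.holderWith.memHolder
  have hpi : piMap n y₀ a A σ h =
      a⁻¹ • (A.symm ∘ h ∘ σ) + Function.const Y (-(a⁻¹ • A.symm (h (σ y₀)))) :=
    funext fun _ => sub_eq_add_neg _ _
  exact ⟨hpi ▸ hcomp.smul.add memHolder_const, piMap_apply_basepoint⟩

end Holder

theorem formMap_comp_formMap (y₀ : Y) (ha₂ : a₂ ≠ 0) :
    formMap n a₁ A₁ x₁ h₁ σ₁ ∘ formMap n a₂ A₂ x₂ h₂ σ₂ =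
      formMap n (a₁ * a₂) (A₂.trans A₁) (x₂ + a₂⁻¹ • A₂.symm (x₁ + h₁ (σ₂ y₀)))
        (h₂ + piMap n y₀ a₂ A₂ σ₂ h₁) (σ₁ ∘ σ₂) := by
  funext ⟨v, y⟩
  have harg : a₂ • A₂ (v + x₂ + h₂ y) + x₁ + h₁ (σ₂ y) =
      a₂ • A₂ (v + (x₂ + a₂⁻¹ • A₂.symm (x₁ + h₁ (σ₂ y₀))) +
        (h₂ + piMap n y₀ a₂ A₂ σ₂ h₁) y) := by
    simp only [piMap, Pi.add_apply, map_add, map_sub, map_smul, A₂.apply_symm_apply, smul_add,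
      smul_sub, smul_inv_smul₀ ha₂]
    abel
  simp only [formMap, Function.comp_apply, harg, map_smul, mul_smul,
    LinearIsometryEquiv.trans_apply]

theorem formMap_fst_eq_zero_iff (ha : a ≠ 0) {p : EuclideanSpace ℝ (Fin n) × Y} :
    (formMap n a A x₀ h σ p).1 = 0 ↔ p.1 = -(x₀ + h p.2) := by
  rw [formMap, smul_eq_zero_iff_right ha, map_eq_zero_iff A A.injective, add_assoc,
    add_eq_zero_iff_eq_neg]

theorem translation_eq_of_formMap_eq (ha₁ : a₁ ≠ 0) (ha₂ : a₂ ≠ 0) (hh₁ : h₁ y₀ = 0)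
    (hh₂ : h₂ y₀ = 0) (heq : formMap n a₁ A₁ x₁ h₁ σ₁ = formMap n a₂ A₂ x₂ h₂ σ₂) :
    x₁ = x₂ ∧ h₁ = h₂ := by
  have hadd (y : Y) : x₁ + h₁ y = x₂ + h₂ y := by
    have hzero : (formMap n a₁ A₁ x₁ h₁ σ₁ (-(x₁ + h₁ y), y)).1 = 0 :=
      (formMap_fst_eq_zero_iff ha₁).mpr rfl
    rw [heq] at hzero
    exact neg_injective ((formMap_fst_eq_zero_iff ha₂).mp hzero)
  obtain rfl : x₁ = x₂ := by simpa only [hh₁, hh₂, add_zero] using hadd y₀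
  exact ⟨rfl, funext fun y => add_left_cancel (hadd y)⟩

theorem formMap_inj (hn : 1 ≤ n) (ha₁ : 0 < a₁) (ha₂ : 0 < a₂) (hh₁ : h₁ y₀ = 0)
    (hh₂ : h₂ y₀ = 0) :
    formMap n a₁ A₁ x₁ h₁ σ₁ = formMap n a₂ A₂ x₂ h₂ σ₂ ↔
      a₁ = a₂ ∧ A₁ = A₂ ∧ x₁ = x₂ ∧ h₁ = h₂ ∧ σ₁ = σ₂ := by
  refine ⟨fun heq => ?_, by rintro ⟨rfl, rfl, rfl, rfl, rfl⟩; rfl⟩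
  have : NeZero n := ⟨Nat.one_le_iff_ne_zero.mp hn⟩
  obtain ⟨rfl, rfl⟩ := translation_eq_of_formMap_eq ha₁.ne' ha₂.ne' hh₁ hh₂ heq
  have hlin : a₁ • ⇑A₁ = a₂ • ⇑A₂ := by
    funext v
    simpa only [formMap, hh₁, add_zero, sub_add_cancel, Pi.smul_apply] using
      congrArg Prod.fst (congrFun heq (v - x₁, y₀))
  obtain ⟨ha, hA⟩ := (smul_inj_of_norm_preserving ha₁ ha₂ A₁.norm_map A₂.norm_map).mp hlin
  exact ⟨ha, DFunLike.coe_injective hA, rfl, rfl,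
    funext fun y => congrArg Prod.snd (congrFun heq (0, y))⟩

theorem eq_add_piMap_of_formMap_eq_comp (ha : a ≠ 0) (ha₁ : a₁ ≠ 0) (ha₂ : a₂ ≠ 0)
    (hh : h y₀ = 0) (hh₂ : h₂ y₀ = 0)
    (heq : formMap n a A x₀ h σ = formMap n a₁ A₁ x₁ h₁ σ₁ ∘ formMap n a₂ A₂ x₂ h₂ σ₂) :
    h = h₂ + piMap n y₀ a₂ A₂ σ₂ h₁ := by
  have hzero : (h₂ + piMap n y₀ a₂ A₂ σ₂ h₁) y₀ = 0 := by
    rw [Pi.add_apply, hh₂, piMap_apply_basepoint, add_zero]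
  rw [formMap_comp_formMap y₀ ha₂] at heq
  exact (translation_eq_of_formMap_eq ha (mul_ne_zero ha₁ ha₂) hh hzero heq).2

end FormMap

theorem formMaps_compose_and_cocycle_general (n : ℕ) {Y : Type*} [MetricSpace Y] (y₀ : Y)
    (β : ℝ) (hβ : 0 < β) {Γ : Type*} [Monoid Γ]
    (ρ : Γ →* Function.End (EuclideanSpace ℝ (Fin n) × Y))
    (a : Γ → ℝ) (ha : ∀ γ, a γ ≠ 0)
    (A : Γ → EuclideanSpace ℝ (Fin n) ≃ₗᵢ[ℝ] EuclideanSpace ℝ (Fin n))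
    (x : Γ → EuclideanSpace ℝ (Fin n)) (h : Γ → Y → EuclideanSpace ℝ (Fin n))
    (hh : ∀ γ, h γ y₀ = 0) (σ : Γ → Y → Y)
    (hform : ∀ γ, ρ γ = formMap n (a γ) (A γ) (x γ) (h γ) (σ γ)) :
    (∀ (a₁ a₂ : ℝ), 0 < a₁ → 0 < a₂ →
      ∀ (A₁ A₂ : EuclideanSpace ℝ (Fin n) ≃ₗᵢ[ℝ] EuclideanSpace ℝ (Fin n))
        (x₁ x₂ : EuclideanSpace ℝ (Fin n)) (h₁ h₂ : Y → EuclideanSpace ℝ (Fin n)),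
        IsHolderZero n y₀ β h₁ → IsHolderZero n y₀ β h₂ →
      ∀ σ₁ σ₂ : Y → Y,
        (∃ c : ℝ, 0 < c ∧ IsSimilarityWith c σ₁) →
        (∃ c : ℝ, 0 < c ∧ IsSimilarityWith c σ₂) →
        (formMap n a₁ A₁ x₁ h₁ σ₁ ∘ formMap n a₂ A₂ x₂ h₂ σ₂ =
          formMap n (a₁ * a₂) (A₂.trans A₁)
            (x₂ + a₂⁻¹ • A₂.symm (x₁ + h₁ (σ₂ y₀)))
            (h₂ + piMap n y₀ a₂ A₂ σ₂ h₁) (σ₁ ∘ σ₂)) ∧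
        0 < a₁ * a₂ ∧
        IsHolderZero n y₀ β (h₂ + piMap n y₀ a₂ A₂ σ₂ h₁) ∧
        (∃ c : ℝ, 0 < c ∧ IsSimilarityWith c (σ₁ ∘ σ₂))) ∧
    (1 ≤ n → ∀ (a₁ a₂ : ℝ), 0 < a₁ → 0 < a₂ →
      ∀ (A₁ A₂ : EuclideanSpace ℝ (Fin n) ≃ₗᵢ[ℝ] EuclideanSpace ℝ (Fin n))
        (x₁ x₂ : EuclideanSpace ℝ (Fin n)) (h₁ h₂ : Y → EuclideanSpace ℝ (Fin n)),
        h₁ y₀ = 0 → h₂ y₀ = 0 →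
      ∀ σ₁ σ₂ : Y → Y,
        formMap n a₁ A₁ x₁ h₁ σ₁ = formMap n a₂ A₂ x₂ h₂ σ₂ →
        a₁ = a₂ ∧ A₁ = A₂ ∧ x₁ = x₂ ∧ h₁ = h₂ ∧ σ₁ = σ₂) ∧
    (∀ γ₁ γ₂ : Γ,
      h (γ₁ * γ₂) = h γ₂ + piMap n y₀ (a γ₂) (A γ₂) (σ γ₂) (h γ₁)) := by
  refine ⟨?_, ?_, fun γ₁ γ₂ => ?_⟩
  · rintro a₁ a₂ ha₁ ha₂ A₁ A₂ x₁ x₂ h₁ h₂ hh₁ hh₂ σ₁ σ₂ ⟨c₁, hc₁, hσ₁⟩ ⟨c₂, hc₂, hσ₂⟩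
    exact ⟨formMap_comp_formMap y₀ ha₂.ne', mul_pos ha₁ ha₂,
      hh₂.add hβ (isHolderZero_piMap hβ hh₁ hσ₂.lipschitzWith),
      c₁ * c₂, mul_pos hc₁ hc₂, hσ₁.comp hσ₂⟩
  · intro hn a₁ a₂ ha₁ ha₂ A₁ A₂ x₁ x₂ h₁ h₂ hh₁ hh₂ σ₁ σ₂
    exact (formMap_inj hn ha₁ ha₂ hh₁ hh₂).mp
  · have hmul := map_mul ρ γ₁ γ₂
    simp only [hform] at hmul
    exact eq_add_piMap_of_formMap_eq_comp (ha _) (ha γ₁) (ha γ₂) (hh _) (hh γ₂) hmul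

/-- Maps of the form `γ(x,y) = (a A (x + x₀ + h y), σ y)` are closed under
composition, their data `(a,A,x₀,h,σ)` is uniquely determined, the composite satisfies
`h_{γ₁∘γ₂} = h_{γ₂} + π_{γ₂} h_{γ₁}`, and consequently for any group `Γ` of such maps the
map `b : Γ* → E`, `b_γ = h_γ`, satisfies the 1-cocycle identity
`b_{γ₂*γ₁} = b_{γ₂} + π_{γ₂} b_{γ₁}` for the `Γ*`-module structure `π` on `E`. -/
theorem formMaps_compose_and_cocycle (n : ℕ) (hn : 1 ≤ n)
    {Y : Type*} [MetricSpace Y] (y₀ : Y) (β : ℝ) (hβ0 : 0 < β) (hβ1 : β ≤ 1)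
    {Γ : Type*} [Group Γ]
    (ρ : Γ →* Equiv.Perm (EuclideanSpace ℝ (Fin n) × Y))
    (a : Γ → ℝ) (ha : ∀ γ : Γ, 0 < a γ)
    (A : Γ → EuclideanSpace ℝ (Fin n) ≃ₗᵢ[ℝ] EuclideanSpace ℝ (Fin n))
    (x : Γ → EuclideanSpace ℝ (Fin n))
    (h : Γ → Y → EuclideanSpace ℝ (Fin n))
    (hhE : ∀ γ : Γ, IsHolderZero n y₀ β (h γ))
    (σ : Γ → Y → Y)
    (hσ : ∀ γ : Γ, ∃ c : ℝ, 0 < c ∧ IsSimilarityWith c (σ γ))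
    (hform : ∀ (γ : Γ) (p : EuclideanSpace ℝ (Fin n) × Y),
      ρ γ p = formMap n (a γ) (A γ) (x γ) (h γ) (σ γ) p) :
    -- closure under composition, with explicit data of the composite
    (∀ (a₁ a₂ : ℝ), 0 < a₁ → 0 < a₂ →
      ∀ (A₁ A₂ : EuclideanSpace ℝ (Fin n) ≃ₗᵢ[ℝ] EuclideanSpace ℝ (Fin n))
        (x₁ x₂ : EuclideanSpace ℝ (Fin n)) (h₁ h₂ : Y → EuclideanSpace ℝ (Fin n)),
        IsHolderZero n y₀ β h₁ → IsHolderZero n y₀ β h₂ →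
      ∀ σ₁ σ₂ : Y → Y,
        (∃ c : ℝ, 0 < c ∧ IsSimilarityWith c σ₁) →
        (∃ c : ℝ, 0 < c ∧ IsSimilarityWith c σ₂) →
        (formMap n a₁ A₁ x₁ h₁ σ₁ ∘ formMap n a₂ A₂ x₂ h₂ σ₂ =
          formMap n (a₁ * a₂) (A₂.trans A₁)
            (x₂ + a₂⁻¹ • A₂.symm (x₁ + h₁ (σ₂ y₀)))
            (h₂ + piMap n y₀ a₂ A₂ σ₂ h₁) (σ₁ ∘ σ₂)) ∧
        0 < a₁ * a₂ ∧
        IsHolderZero n y₀ β (h₂ + piMap n y₀ a₂ A₂ σ₂ h₁) ∧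
        (∃ c : ℝ, 0 < c ∧ IsSimilarityWith c (σ₁ ∘ σ₂))) ∧
    -- uniqueness of the data
    (∀ (a₁ a₂ : ℝ), 0 < a₁ → 0 < a₂ →
      ∀ (A₁ A₂ : EuclideanSpace ℝ (Fin n) ≃ₗᵢ[ℝ] EuclideanSpace ℝ (Fin n))
        (x₁ x₂ : EuclideanSpace ℝ (Fin n)) (h₁ h₂ : Y → EuclideanSpace ℝ (Fin n)),
        IsHolderZero n y₀ β h₁ → IsHolderZero n y₀ β h₂ →
      ∀ σ₁ σ₂ : Y → Y,
        (∃ c : ℝ, 0 < c ∧ IsSimilarityWith c σ₁) →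
        (∃ c : ℝ, 0 < c ∧ IsSimilarityWith c σ₂) →
        formMap n a₁ A₁ x₁ h₁ σ₁ = formMap n a₂ A₂ x₂ h₂ σ₂ →
        a₁ = a₂ ∧ A₁ = A₂ ∧ x₁ = x₂ ∧ h₁ = h₂ ∧ σ₁ = σ₂) ∧
    -- the cocycle identity for the group Γ
    (∀ γ₁ γ₂ : Γ,
      h (γ₁ * γ₂) = h γ₂ + piMap n y₀ (a γ₂) (A γ₂) (σ γ₂) (h γ₁)) := by
  have ⟨hcomp, hunique, hcocycle⟩ := formMaps_compose_and_cocycle_general n y₀ β hβ0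
    (MulAction.toEndHom.comp ρ) a (fun γ => (ha γ).ne') A x h (fun γ => (hhE γ).2) σ
    fun γ => funext (hform γ)
  exact ⟨hcomp, fun a₁ a₂ ha₁ ha₂ A₁ A₂ x₁ x₂ h₁ h₂ hh₁ hh₂ σ₁ σ₂ _ _ =>
    hunique hn a₁ a₂ ha₁ ha₂ A₁ A₂ x₁ x₂ h₁ h₂ hh₁.2 hh₂.2 σ₁ σ₂, hcocycle⟩
end
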